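/- Let P be an algebraically closed field, n ≥ 1, and A = P[x_1,…,x_n]. Then every automorphism of the monoid End(A) is semiinner: for every monoid automorphism τ of End(A) there exist a field automorphism α : P → P and a P-algebra automorphism η of A such that, setting μ = ᾱ ∘ η (where ᾱ : A → A is the ring automorphism applying α to each coefficient of a polynomial), one has τ(s) = μ ∘ s ∘ μ⁻¹ (as maps A → A) for every s ∈ End(A). In particular, the group Aut(End(P[x_1,…,x_n])) is generated by semiinner automorphisms. -/

import Mathlib

/-!
Composition with endomorphisms makes `End A` act on the points `A →ₐ[K] K`, and the endomorphisms
that factor through `K` recover this action from the monoid, so an automorphism `τ` permutes the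
points. Call an idempotent endomorphism a *line* if it splits through `K[X]`. Once `τ` is known to
carry a line `ℓ` to a line `m`, elements `f` of `A` are recovered from the endomorphisms sending the
coordinate of `ℓ` to `f`, and `τ` yields a bijection of `A` intertwining `s` with `τ s`. On scalars
this bijection normalizes the polynomial functions, hence is `x ↦ d * α x + e` for a field
automorphism `α`; undoing the affine part and comparing values at points makes it an `α`-semilinear
ring automorphism of `A`, which is the required conjugator.

That `τ` carries lines to lines rests on a property of lines visible in the monoid: on their points,
every endomorphism is constant or has finite fibres. Let `r` be a nonconstant idempotent with this
property, and `b` a nonconstant polynomial of least degree fixed by `r`, translated to vanish at a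
point `y` fixed by `r`. By unique factorization, the elements whose image under `r` is divisible by
`b` form a prime ideal. Every fixed `c` is algebraically dependent on `b`, which forces this ideal
to be the kernel of `y`. So `b` divides `c - c(y)`, and by induction on the degree `r` has image
`K[b]`.
-/

open scoped Polynomial

section Points

variable {K A : Type*} [CommSemiring K] [Semiring A] [Algebra K A]

/-- The endomorphism `a ↦ x a` attached to a `K`-point `x` of `A`. As `constEnd x * s` is
`constEnd (x.comp s)`, these recover from the monoid `End A` its action on the points. -/
def constEnd (x : A →ₐ[K] K) : A →ₐ[K] A :=
  (Algebra.ofId K A).comp x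

lemma constEnd_apply (x : A →ₐ[K] K) (a : A) : constEnd x a = algebraMap K A (x a) := rfl

lemma constEnd_mul (x : A →ₐ[K] K) (s : A →ₐ[K] A) : constEnd x * s = constEnd (x.comp s) := rfl

lemma mul_constEnd (s : A →ₐ[K] A) (x : A →ₐ[K] K) : s * constEnd x = constEnd x :=
  AlgHom.ext fun _ ↦ s.commutes _

lemma constEnd_injective : Function.Injective (constEnd : (A →ₐ[K] K) → A →ₐ[K] A) := by
  intro x y hxy
  ext a
  simpa [constEnd_apply] using congr(x ($hxy a))

lemma constEnd_comp_map_constEnd (τ : (A →ₐ[K] A) ≃* (A →ₐ[K] A)) (x : A →ₐ[K] K) :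
    constEnd (x.comp (τ (constEnd x))) = τ (constEnd x) := by
  calc constEnd x * τ (constEnd x) = τ (τ.symm (constEnd x) * constEnd x) := by
        rw [map_mul, τ.apply_symm_apply]
    _ = τ (constEnd x) := by rw [mul_constEnd]

/-- The permutation of the `K`-points of `A` induced by an automorphism of the monoid `End A`
through its action on the endomorphisms `constEnd x`. -/
def pointEquiv (τ : (A →ₐ[K] A) ≃* (A →ₐ[K] A)) : (A →ₐ[K] K) ≃ (A →ₐ[K] K) where
  toFun x := x.comp (τ (constEnd x))
  invFun x := x.comp (τ.symm (constEnd x))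
  left_inv x := constEnd_injective <| by
    rw [constEnd_comp_map_constEnd, constEnd_comp_map_constEnd, τ.symm_apply_apply]
  right_inv x := constEnd_injective <| by
    rw [constEnd_comp_map_constEnd, constEnd_comp_map_constEnd, τ.apply_symm_apply]

lemma constEnd_pointEquiv (τ : (A →ₐ[K] A) ≃* (A →ₐ[K] A)) (x : A →ₐ[K] K) :
    constEnd (pointEquiv τ x) = τ (constEnd x) :=
  constEnd_comp_map_constEnd τ x

lemma pointEquiv_comp (τ : (A →ₐ[K] A) ≃* (A →ₐ[K] A)) (x : A →ₐ[K] K) (s : A →ₐ[K] A) :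
    pointEquiv τ (x.comp s) = (pointEquiv τ x).comp (τ s) := by
  apply constEnd_injective
  rw [constEnd_pointEquiv, ← constEnd_mul, ← constEnd_mul, map_mul, constEnd_pointEquiv]

end Points

section PolynomialConjugation

variable {K : Type*} [Field K]

/-- Conjugation by the permutation `ν` sends polynomial functions of one variable to polynomial
functions. -/
def NormalizesPolynomials (ν : K ≃ K) : Prop :=
  ∀ p : K[X], ∃ q : K[X], ∀ x, ν (p.eval x) = q.eval (ν x)

namespace NormalizesPolynomials

variable {ν : K ≃ K}

lemma exists_affine [Infinite K] (hν : NormalizesPolynomials ν) {a : K} (ha : a ≠ 0) (b : K) :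
    ∃ c d : K, ∀ x, ν (a * x + b) = c * ν x + d := by
  obtain ⟨q, hq⟩ := hν (.C a * .X + .C b)
  obtain ⟨q', hq'⟩ := hν (.C a⁻¹ * (.X - .C b))
  have comp_eq_X : q.comp q' = .X := by
    refine Polynomial.funext fun t ↦ ?_
    obtain ⟨x, rfl⟩ := ν.surjective t
    rw [Polynomial.eval_comp, ← hq', ← hq]
    simp [ha]
  have degree_mul : q.natDegree * q'.natDegree = 1 := by
    rw [← Polynomial.natDegree_comp, comp_eq_X, Polynomial.natDegree_X]
  obtain ⟨c, d, rfl⟩ :=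
    Polynomial.exists_eq_X_add_C_of_natDegree_le_one (Nat.eq_one_of_mul_eq_one_right degree_mul).le
  exact ⟨c, d, fun x ↦ by simpa using hq x⟩

lemma map_add [Infinite K] (hν : NormalizesPolynomials ν) (h0 : ν 0 = 0) (x b : K) :
    ν (x + b) = ν x + ν b := by
  obtain rfl | hb := eq_or_ne b 0
  · simp [h0]
  obtain ⟨c, d, hcd⟩ := hν.exists_affine one_ne_zero b
  simp only [one_mul] at hcd
  -- An affine map of slope `≠ 1` has a fixed point, but a nonzero translation has none.
  have slope_eq_one : c = 1 := by
    by_contra hc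
    obtain ⟨z, hz⟩ := ν.surjective (d / (1 - c))
    have fixed : ν (z + b) = ν z := by
      have := sub_ne_zero.2 (Ne.symm hc)
      rw [hcd, hz]
      field_simp
      ring
    exact hb (by simpa using ν.injective fixed)
  have hd := hcd 0
  simp only [zero_add, h0, mul_zero] at hd
  rw [hcd, slope_eq_one, one_mul, hd]

lemma map_mul [Infinite K] (hν : NormalizesPolynomials ν) (h0 : ν 0 = 0) (h1 : ν 1 = 1)
    (a x : K) : ν (a * x) = ν a * ν x := by
  obtain rfl | ha := eq_or_ne a 0
  · simp [h0]
  obtain ⟨c, d, hcd⟩ := hν.exists_affine ha 0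
  simp only [add_zero] at hcd
  have hd : d = 0 := by simpa [h0] using (hcd 0).symm
  have hc : ν a = c := by simpa [h1, hd] using hcd 1
  rw [hcd, hd, add_zero, hc]

lemma trans_affine (hν : NormalizesPolynomials ν) {d : K} (hd : d ≠ 0) (e : K) :
    NormalizesPolynomials ((ν.trans (Equiv.subRight e)).trans (Equiv.divRight₀ d hd)) := by
  intro p
  obtain ⟨q, hq⟩ := hν p
  refine ⟨.C d⁻¹ * (q.comp (.C d * .X + .C e) - .C e), fun x ↦ ?_⟩
  simp [hq, mul_inv_cancel_left₀ hd, div_eq_inv_mul]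

theorem exists_ringEquiv [Infinite K] (hν : NormalizesPolynomials ν) :
    ∃ (α : K ≃+* K) (d e : K), d ≠ 0 ∧ ∀ x, ν x = d * α x + e := by
  have hd : ν 1 - ν 0 ≠ 0 := sub_ne_zero.2 (ν.injective.ne one_ne_zero)
  let β : K ≃ K := (ν.trans (Equiv.subRight (ν 0))).trans (Equiv.divRight₀ (ν 1 - ν 0) hd)
  have β_apply : ∀ x, β x = (ν x - ν 0) / (ν 1 - ν 0) := fun _ ↦ rfl
  have hβ : NormalizesPolynomials β := hν.trans_affine hd (ν 0)
  have β_zero : β 0 = 0 := by simp [β_apply]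
  have β_one : β 1 = 1 := by simp [β_apply, hd]
  refine ⟨{ β with map_mul' := hβ.map_mul β_zero β_one, map_add' := hβ.map_add β_zero },
    ν 1 - ν 0, ν 0, hd, fun x ↦ ?_⟩
  change ν x = (ν 1 - ν 0) * β x + ν 0
  rw [β_apply, mul_div_cancel₀ _ hd, sub_add_cancel]

end NormalizesPolynomials

end PolynomialConjugation

/-- A split embedding of the affine line: `K[X]` as a retract of the `K`-algebra `A`. -/
structure LineRetract (K A : Type*) [CommSemiring K] [Semiring A] [Algebra K A] where
  incl : K[X] →ₐ[K] A
  proj : A →ₐ[K] K[X]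
  proj_comp_incl : proj.comp incl = AlgHom.id K K[X]

namespace LineRetract

section Transport

variable {K A : Type*} [CommSemiring K] [Semiring A] [Algebra K A]

/-- The idempotent endomorphism of `A` that splits as the given retraction onto `K[X]`. -/
noncomputable def idem (ℓ : LineRetract K A) : A →ₐ[K] A :=
  ℓ.incl.comp ℓ.proj

lemma proj_incl (ℓ : LineRetract K A) (p : K[X]) : ℓ.proj (ℓ.incl p) = p :=
  DFunLike.congr_fun ℓ.proj_comp_incl p

lemma idem_incl (ℓ : LineRetract K A) (p : K[X]) : ℓ.idem (ℓ.incl p) = ℓ.incl p :=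
  congrArg ℓ.incl (ℓ.proj_incl p)

lemma nontrivial [Nontrivial K] (ℓ : LineRetract K A) : Nontrivial A :=
  ℓ.proj.toRingHom.domain_nontrivial

lemma isIdempotentElem_idem (ℓ : LineRetract K A) : IsIdempotentElem ℓ.idem :=
  AlgHom.ext fun a ↦ ℓ.idem_incl (ℓ.proj a)

lemma idem_ne_constEnd [Nontrivial K] (ℓ : LineRetract K A) (x : A →ₐ[K] K) :
    ℓ.idem ≠ constEnd x := by
  intro h
  have incl_X : ℓ.incl .X = algebraMap K A (x (ℓ.incl .X)) := by
    rw [← constEnd_apply, ← h, idem_incl]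
  have X_eq_C := congrArg ℓ.proj incl_X
  rw [proj_incl, AlgHom.commutes, Polynomial.algebraMap_eq] at X_eq_C
  exact Polynomial.X_ne_C _ X_eq_C

/-- The endomorphism of `A` with image in `K[f]` that sends the coordinate of the line `ℓ` to
`f`. -/
noncomputable def endo (ℓ : LineRetract K A) (f : A) : A →ₐ[K] A :=
  (Polynomial.aeval f).comp ℓ.proj

lemma endo_incl (ℓ : LineRetract K A) (f : A) (p : K[X]) :
    ℓ.endo f (ℓ.incl p) = Polynomial.aeval f p :=
  congrArg (Polynomial.aeval f) (ℓ.proj_incl p)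

lemma endo_mul_idem (ℓ : LineRetract K A) (f : A) : ℓ.endo f * ℓ.idem = ℓ.endo f :=
  AlgHom.ext fun _ ↦ ℓ.endo_incl f _

lemma endo_map (ℓ : LineRetract K A) (s : A →ₐ[K] A) (f : A) :
    ℓ.endo (s f) = s * ℓ.endo f := by
  rw [endo, Polynomial.aeval_algHom]
  rfl

variable (τ : (A →ₐ[K] A) ≃* (A →ₐ[K] A)) (ℓ m : LineRetract K A)

/-- The action of `τ` on elements of `A`, these being identified with the endomorphisms
`ℓ.endo f` in the source and `m.endo f` in the target. -/
noncomputable def transport (f : A) : A :=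
  τ (ℓ.endo f) (m.incl .X)

lemma map_endo_incl (f : A) (p : K[X]) :
    τ (ℓ.endo f) (m.incl p) = Polynomial.aeval (transport τ ℓ m f) p := by
  rw [transport, ← AlgHom.comp_apply, ← AlgHom.comp_apply, Polynomial.aeval_algHom]
  simp

lemma transport_map (s : A →ₐ[K] A) (f : A) :
    transport τ ℓ m (s f) = τ s (transport τ ℓ m f) := by
  simp only [transport, endo_map, map_mul, AlgHom.mul_apply]

lemma transport_algebraMap_apply (x : A →ₐ[K] K) (f : A) :
    transport τ ℓ m (algebraMap K A (x f)) =
      algebraMap K A (pointEquiv τ x (transport τ ℓ m f)) := by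
  rw [← constEnd_apply, transport_map, ← constEnd_pointEquiv, constEnd_apply]

variable {τ ℓ m}

lemma endo_transport (h : τ ℓ.idem = m.idem) (f : A) :
    m.endo (transport τ ℓ m f) = τ (ℓ.endo f) := by
  calc m.endo (transport τ ℓ m f) = τ (ℓ.endo f) * m.idem :=
        AlgHom.ext fun a ↦ (map_endo_incl τ ℓ m f (m.proj a)).symm
    _ = τ (ℓ.endo f) := by rw [← h, ← map_mul, endo_mul_idem]

lemma transport_symm_transport (h : τ ℓ.idem = m.idem) (f : A) :
    transport τ.symm m ℓ (transport τ ℓ m f) = f := by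
  rw [transport, endo_transport h, τ.symm_apply_apply, endo_incl, Polynomial.aeval_X]

lemma transport_transport_symm (h : τ ℓ.idem = m.idem) (f : A) :
    transport τ ℓ m (transport τ.symm m ℓ f) = f :=
  transport_symm_transport (τ.symm_apply_eq.2 h.symm) f

/-- `transport` as a permutation of `A`. -/
noncomputable def transportEquiv (h : τ ℓ.idem = m.idem) : A ≃ A where
  toFun := transport τ ℓ m
  invFun := transport τ.symm m ℓ
  left_inv := transport_symm_transport h
  right_inv := transport_transport_symm h

lemma transport_aeval (h : τ ℓ.idem = m.idem) (f : A) (p : K[X]) :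
    transport τ ℓ m (Polynomial.aeval f p) =
      Polynomial.aeval (transport τ ℓ m f) (m.proj (transport τ ℓ m (ℓ.incl p))) := by
  have mem_line : transport τ ℓ m (ℓ.incl p) =
      m.incl (m.proj (transport τ ℓ m (ℓ.incl p))) := by
    conv_lhs => rw [← idem_incl, transport_map, h]
    rfl
  rw [← endo_incl, transport_map, mem_line, map_endo_incl, proj_incl]

end Transport

section Semilinear

variable {K A : Type*} [Field K] [CommRing A] [Algebra K A]
  {τ : (A →ₐ[K] A) ≃* (A →ₐ[K] A)} {ℓ m : LineRetract K A}

lemma exists_transport_algebraMap (h : τ ℓ.idem = m.idem) :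
    ∃ ν : K ≃ K, ∀ c, transport τ ℓ m (algebraMap K A c) = algebraMap K A (ν c) := by
  let x : A →ₐ[K] K := (Polynomial.aeval 0).comp ℓ.proj
  have scalar : ∀ (τ' : (A →ₐ[K] A) ≃* (A →ₐ[K] A)) ℓ' m' c,
      algebraMap K A (x (transport τ' ℓ' m' (algebraMap K A c))) =
        transport τ' ℓ' m' (algebraMap K A c) := by
    intro τ' ℓ' m' c
    have := transport_algebraMap_apply τ' ℓ' m' x (algebraMap K A c)
    rw [AlgHom.commutes, Algebra.algebraMap_self_apply] at this
    rw [this, AlgHom.commutes, Algebra.algebraMap_self_apply]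
  refine ⟨⟨fun c ↦ x (transport τ ℓ m (algebraMap K A c)),
    fun c ↦ x (transport τ.symm m ℓ (algebraMap K A c)), fun c ↦ ?_, fun c ↦ ?_⟩,
    fun c ↦ (scalar τ ℓ m c).symm⟩
  · simp only [scalar, transport_symm_transport h, AlgHom.commutes, Algebra.algebraMap_self_apply]
  · simp only [scalar, transport_transport_symm h, AlgHom.commutes, Algebra.algebraMap_self_apply]

lemma normalizesPolynomials_of_transport_algebraMap (h : τ ℓ.idem = m.idem)
    {ν : K ≃ K} (hν : ∀ c, transport τ ℓ m (algebraMap K A c) = algebraMap K A (ν c)) :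
    NormalizesPolynomials ν := by
  have := ℓ.nontrivial
  refine fun p ↦ ⟨m.proj (transport τ ℓ m (ℓ.incl p)), fun c ↦ (algebraMap K A).injective ?_⟩
  rw [← hν, ← Polynomial.aeval_algebraMap_apply_eq_algebraMap_eval, transport_aeval h, hν,
    Polynomial.aeval_algebraMap_apply_eq_algebraMap_eval]

theorem exists_semilinear_ringEquiv [Infinite K] (h : τ ℓ.idem = m.idem)
    (ext_points : ∀ f g : A, (∀ x : A →ₐ[K] K, x f = x g) → f = g) :
    ∃ (α : K ≃+* K) (T : A ≃+* A), (∀ c, T (algebraMap K A c) = algebraMap K A (α c)) ∧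
      ∀ s f, T (s f) = τ s (T f) := by
  obtain ⟨ν, hν⟩ := exists_transport_algebraMap h
  obtain ⟨α, d, e, hd, hα⟩ :=
    (normalizesPolynomials_of_transport_algebraMap h hν).exists_ringEquiv
  have := ℓ.nontrivial
  let T : A ≃ A := ((transportEquiv h).trans (Equiv.subRight (algebraMap K A e))).trans
    (MulAction.toPerm (Units.mk0 d hd)⁻¹)
  have T_apply : ∀ f, T f = d⁻¹ • (transport τ ℓ m f - algebraMap K A e) := fun _ ↦ rfl
  have point_T : ∀ x f, pointEquiv τ x (T f) = α (x f) := by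
    intro x f
    have point_transport : pointEquiv τ x (transport τ ℓ m f) = ν (x f) :=
      (algebraMap K A).injective (by rw [← transport_algebraMap_apply, hν])
    rw [T_apply, map_smul, map_sub, point_transport, AlgHom.commutes,
      Algebra.algebraMap_self_apply, hα, add_sub_cancel_right, smul_eq_mul,
      inv_mul_cancel_left₀ hd]
  have ext_pointEquiv : ∀ f g : A, (∀ x, pointEquiv τ x f = pointEquiv τ x g) → f = g :=
    fun f g hfg ↦ ext_points f g ((pointEquiv τ).surjective.forall.2 hfg)
  refine ⟨α, { T with
    map_mul' := fun f g ↦ ext_pointEquiv _ _ fun x ↦ ?_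
    map_add' := fun f g ↦ ext_pointEquiv _ _ fun x ↦ ?_ }, fun c ↦ ?_, fun s f ↦ ?_⟩
  · change pointEquiv τ x (T (f * g)) = pointEquiv τ x (T f * T g)
    simp only [map_mul, point_T]
  · change pointEquiv τ x (T (f + g)) = pointEquiv τ x (T f + T g)
    simp only [map_add, point_T]
  · exact ext_pointEquiv _ _ fun x ↦ (point_T x _).trans (by simp)
  · change T (s f) = τ s (T f)
    simp only [T_apply, transport_map, map_smul, map_sub, AlgHom.commutes]

end Semilinear

end LineRetract

section CurveLike

variable {K A : Type*} [CommSemiring K] [Semiring A] [Algebra K A]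

/-- On the set of `K`-points fixed by `e`, every endomorphism of `A` either is constant or has
finite fibres. For an idempotent `e` the fixed points are the image of the map induced by `e`, and
this says, in terms preserved by automorphisms of `End A`, that the image is at most a curve. -/
def IsCurveLike (e : A →ₐ[K] A) : Prop :=
  ∀ (s : A →ₐ[K] A) (a : A →ₐ[K] K), {x : A →ₐ[K] K | x.comp e = x ∧ x.comp s = a}.Finite ∨
    ∀ x : A →ₐ[K] K, x.comp e = x → x.comp s = a

lemma IsCurveLike.map {e : A →ₐ[K] A} (he : IsCurveLike e) (τ : (A →ₐ[K] A) ≃* (A →ₐ[K] A)) :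
    IsCurveLike (τ e) := by
  intro s a
  have fixed_iff (x : A →ₐ[K] K) :
      (pointEquiv τ x).comp (τ e) = pointEquiv τ x ↔ x.comp e = x := by
    rw [← pointEquiv_comp, EmbeddingLike.apply_eq_iff_eq]
  have fibre_iff (x : A →ₐ[K] K) :
      (pointEquiv τ x).comp s = a ↔ x.comp (τ.symm s) = (pointEquiv τ).symm a := by
    rw [Equiv.eq_symm_apply, pointEquiv_comp, τ.apply_symm_apply]
  refine (he (τ.symm s) ((pointEquiv τ).symm a)).imp (fun hfin ↦ ?_) fun hconst ↦ ?_
  · refine (hfin.image (pointEquiv τ)).subset ((pointEquiv τ).surjective.forall.2 ?_)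
    exact fun x hx ↦ ⟨x, ⟨(fixed_iff x).1 hx.1, (fibre_iff x).1 hx.2⟩, rfl⟩
  · exact (pointEquiv τ).surjective.forall.2
      fun x hx ↦ (fibre_iff x).2 (hconst x ((fixed_iff x).1 hx))

end CurveLike

namespace LineRetract

lemma apply_eq_eval_of_comp_idem {K A : Type*} [CommSemiring K] [Semiring A] [Algebra K A]
    (ℓ : LineRetract K A) {x : A →ₐ[K] K} (hx : x.comp ℓ.idem = x) (f : A) :
    x f = (ℓ.proj f).eval (x (ℓ.incl .X)) := by
  calc x f = x (ℓ.incl (ℓ.proj f)) := (DFunLike.congr_fun hx f).symm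
    _ = (ℓ.proj f).eval (x (ℓ.incl .X)) := by
      rw [← Polynomial.coe_aeval_eq_eval, Polynomial.aeval_algHom, Polynomial.aeval_algHom]
      simp

lemma isCurveLike_idem {K A : Type*} [CommRing K] [IsDomain K] [Semiring A] [Algebra K A]
    (ℓ : LineRetract K A) : IsCurveLike ℓ.idem := by
  intro s a
  rw [or_iff_not_imp_left]
  intro hinf
  have proj_eq_C (f : A) : ℓ.proj (s f) = .C (a f) := by
    refine Polynomial.eq_of_infinite_eval_eq _ _ (Set.infinite_of_injOn_mapsTo
      (f := fun x : A →ₐ[K] K ↦ x (ℓ.incl .X)) ?_ ?_ hinf)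
    · intro x hx y hy (hxy : x (ℓ.incl .X) = y (ℓ.incl .X))
      ext g
      rw [ℓ.apply_eq_eval_of_comp_idem hx.1, ℓ.apply_eq_eval_of_comp_idem hy.1, hxy]
    · intro x hx
      rw [Set.mem_ofPred_eq, ← ℓ.apply_eq_eval_of_comp_idem hx.1, Polynomial.eval_C, ← hx.2]
      rfl
  intro x hx
  ext f
  rw [AlgHom.comp_apply, ℓ.apply_eq_eval_of_comp_idem hx, proj_eq_C, Polynomial.eval_C]

lemma exists_idem_eq {K A : Type*} [CommSemiring K] [Semiring A] [Algebra K A]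
    {r : A →ₐ[K] A} {incl : K[X] →ₐ[K] A} (hincl : Function.Injective incl)
    (hfix : ∀ p, r (incl p) = incl p) (hrange : ∀ a, r a ∈ incl.range) :
    ∃ ℓ : LineRetract K A, ℓ.idem = r := by
  let proj : A →ₐ[K] K[X] :=
    (AlgEquiv.ofInjective incl hincl).symm.toAlgHom.comp (r.codRestrict incl.range hrange)
  have incl_proj (a : A) : incl (proj a) = r a :=
    congrArg Subtype.val
      ((AlgEquiv.ofInjective incl hincl).apply_symm_apply (r.codRestrict incl.range hrange a))
  exact ⟨⟨incl, proj, AlgHom.ext fun p ↦ hincl ((incl_proj _).trans (hfix p))⟩,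
    AlgHom.ext incl_proj⟩

end LineRetract

section AlgebraicRelations

section CommRing

variable {K A B : Type*} [CommRing K] [CommRing A] [CommRing B] [Algebra K A] [Algebra K B]

lemma map_aevalAeval (φ : A →ₐ[K] B) (b c : A) (F : K[X][X]) :
    φ (Polynomial.aevalAeval b c F) = Polynomial.aevalAeval (φ b) (φ c) F := by
  have : φ.comp (Polynomial.aevalAeval b c) = Polynomial.aevalAeval (R := K) (φ b) (φ c) := by
    ext <;> simp
  exact DFunLike.congr_fun this F

lemma aevalAeval_map_C (b c : A) (G : K[X]) :
    Polynomial.aevalAeval b c (G.map Polynomial.C) = Polynomial.aeval c G := by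
  have : (Polynomial.aevalAeval b c).comp (Polynomial.mapAlgHom (Algebra.ofId K K[X])) =
      Polynomial.aeval c := by
    ext
    simp
  exact DFunLike.congr_fun this G

end CommRing

lemma exists_aevalAeval_eq_zero {K : Type*} [CommRing K] [IsDomain K] (u v : K[X]) :
    ∃ F : K[X][X], F ≠ 0 ∧ Polynomial.aevalAeval u v F = 0 := by
  by_contra! h
  have hinj : Function.Injective (Polynomial.aevalAeval (R := K) u v) :=
    (injective_iff_map_eq_zero _).2 fun F hF ↦ by_contra fun hF0 ↦ h F hF0 hF
  have trdeg_le := trdeg_le_of_injective _ hinj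
  rw [← trdeg_add_eq K K[X], Polynomial.trdeg_of_isDomain,
    Polynomial.trdeg_of_isDomain, one_add_one_eq_two] at trdeg_le
  exact absurd trdeg_le (by norm_num)

variable {K A : Type*} [Field K] [CommRing A] [Algebra K A]

-- Divide `F` by the largest possible power of its first variable, then set that variable to `0`.
lemma exists_dvd_aeval_of_aevalAeval_eq_zero [IsDomain A] {b c : A} (hb : b ≠ 0)
    {F : K[X][X]} (hF : F ≠ 0) (h : Polynomial.aevalAeval b c F = 0) :
    ∃ G : K[X], G ≠ 0 ∧ b ∣ Polynomial.aeval c G := by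
  have prime_C_X : Prime (.C .X : K[X][X]) := Polynomial.prime_C_iff.2 Polynomial.prime_X
  obtain ⟨k, F', hF', rfl⟩ := WfDvdMonoid.max_power_factor hF prime_C_X.irreducible
  have hbc : Polynomial.aevalAeval b c F' = 0 := by
    simpa [hb] using h
  have C_X_dvd_iff (H : K[X][X]) : .C .X ∣ H ↔ H.map Polynomial.constantCoeff = 0 := by
    simp [Polynomial.C_dvd_iff_dvd_coeff, Polynomial.X_dvd_iff, Polynomial.ext_iff]
  refine ⟨F'.map Polynomial.constantCoeff, mt (C_X_dvd_iff F').2 hF', ?_⟩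
  have dvd_sub : .C .X ∣ (F'.map Polynomial.constantCoeff).map Polynomial.C - F' := by
    rw [C_X_dvd_iff]
    ext
    simp
  have b_dvd := map_dvd (Polynomial.aevalAeval b c) dvd_sub
  rw [map_sub, hbc, sub_zero] at b_dvd
  simpa only [aevalAeval_map_C, Polynomial.aevalAeval_X] using b_dvd

lemma mem_of_aeval_mem_of_le_ker {I : Ideal A} [I.IsPrime] {y : A →ₐ[K] K}
    (hIy : I ≤ RingHom.ker y) {a : A} (ha : y a = 0) {G : K[X]} (hG : G ≠ 0)
    (hGa : Polynomial.aeval a G ∈ I) : a ∈ I := by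
  obtain ⟨k, H, hH, rfl⟩ := WfDvdMonoid.max_power_factor hG Polynomial.irreducible_X
  have aeval_H_notMem : Polynomial.aeval a H ∉ I := by
    intro hHa
    have := hIy hHa
    rw [RingHom.mem_ker, ← Polynomial.aeval_algHom_apply, ha] at this
    exact hH (Polynomial.X_dvd_iff.2 (by simpa [Polynomial.coeff_zero_eq_eval_zero] using this))
  rw [map_mul, map_pow, Polynomial.aeval_X] at hGa
  exact Ideal.IsPrime.mem_of_pow_mem ‹_› k
    ((Ideal.IsPrime.mem_or_mem ‹_› hGa).resolve_right aeval_H_notMem)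

end AlgebraicRelations

lemma exists_prime_dvd_not_isUnit_map {M N : Type*} [CommMonoidWithZero M]
    [UniqueFactorizationMonoid M] [Monoid N] (φ : M →* N) {b : M} (hb : b ≠ 0)
    (hφb : ¬ IsUnit (φ b)) : ∃ p, Prime p ∧ p ∣ b ∧ ¬ IsUnit (φ p) := by
  induction b using UniqueFactorizationMonoid.induction_on_prime with
  | h₁ => exact absurd rfl hb
  | h₂ x hx => exact absurd (hx.map φ) hφb
  | h₃ a p ha hp ih =>
    by_cases hφp : IsUnit (φ p)
    · have hφa : ¬ IsUnit (φ a) := fun hφa ↦ hφb (by rw [map_mul]; exact hφp.mul hφa)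
      obtain ⟨q, hq, hqa, hφq⟩ := ih ha hφa
      exact ⟨q, hq, hqa.mul_left p, hφq⟩
    · exact ⟨p, hp, dvd_mul_right p a, hφp⟩

section PolynomialRing

lemma exists_eq_constEnd_of_totalDegree_eq_zero {K σ : Type*} [CommSemiring K]
    {r : MvPolynomial σ K →ₐ[K] MvPolynomial σ K}
    (h : ∀ a, (r a).totalDegree = 0) : ∃ x, r = constEnd x := by
  refine ⟨(MvPolynomial.aeval 0).comp r, AlgHom.ext fun a ↦ ?_⟩
  rw [constEnd_apply, AlgHom.comp_apply, MvPolynomial.totalDegree_eq_zero_iff_eq_C.1 (h a)]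
  simp

section Domain

variable {K σ : Type*} [CommRing K] [IsDomain K]

lemma eq_of_forall_point_eq [Infinite K] {f g : MvPolynomial σ K}
    (h : ∀ x : MvPolynomial σ K →ₐ[K] K, x f = x g) : f = g :=
  MvPolynomial.funext fun x ↦ h (MvPolynomial.aeval x)

lemma exists_algHom_natDegree_ne_zero [Infinite K] {b : MvPolynomial σ K} (hb : b.totalDegree ≠ 0) :
    ∃ γ : MvPolynomial σ K →ₐ[K] K[X], (γ b).natDegree ≠ 0 := by
  obtain ⟨x, y, hxy⟩ : ∃ x y : MvPolynomial σ K →ₐ[K] K, x b ≠ y b := by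
    by_contra! h
    have b_eq_C : b = .C (MvPolynomial.aeval (0 : σ → K) b) := eq_of_forall_point_eq fun x ↦ by
      rw [h x (MvPolynomial.aeval 0), MvPolynomial.algHom_C, Algebra.algebraMap_self_apply]
    exact hb (by rw [b_eq_C, MvPolynomial.totalDegree_C])
  let γ : MvPolynomial σ K →ₐ[K] K[X] :=
    MvPolynomial.aeval fun i ↦ .C (x (.X i)) + .C (y (.X i) - x (.X i)) * .X
  have γ_zero : (Polynomial.aeval 0).comp γ = x := MvPolynomial.algHom_ext fun i ↦ by simp [γ]
  have γ_one : (Polynomial.aeval 1).comp γ = y := MvPolynomial.algHom_ext fun i ↦ by simp [γ]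
  refine ⟨γ, fun hdeg ↦ hxy ?_⟩
  obtain ⟨c, hc⟩ := Polynomial.natDegree_eq_zero.1 hdeg
  rw [← γ_zero, ← γ_one, AlgHom.comp_apply, AlgHom.comp_apply, ← hc, Polynomial.aeval_C,
    Polynomial.aeval_C]

-- The curve `γ` yields infinitely many points fixed by `r` at which `f` vanishes.
lemma IsCurveLike.eq_zero_of_map_eq_zero [Infinite K]
    {r : MvPolynomial σ K →ₐ[K] MvPolynomial σ K} (hcurve : IsCurveLike r)
    (hr : IsIdempotentElem r) {γ : MvPolynomial σ K →ₐ[K] K[X]} {b f : MvPolynomial σ K}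
    (hrb : r b = b) (hγb : (γ b).natDegree ≠ 0) (hrf : r f = f) (hγf : γ f = 0) : f = 0 := by
  have comp_fixed (x : MvPolynomial σ K →ₐ[K] K) : (x.comp r).comp r = x.comp r :=
    congrArg x.comp hr
  let y (t : K) : MvPolynomial σ K →ₐ[K] K := ((Polynomial.aeval t).comp γ).comp r
  have y_apply (t : K) {a : MvPolynomial σ K} (ha : r a = a) : y t a = (γ a).eval t := by
    rw [← Polynomial.coe_aeval_eq_eval, ← congrArg γ ha]
    rfl
  have y_infinite : (Set.range y).Infinite := by
    intro hfin
    have := hfin.to_subtype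
    obtain ⟨⟨x, _⟩, hx⟩ := Finite.exists_infinite_fiber (Set.rangeFactorization y)
    have γb_eq_C : γ b = .C (x b) := by
      refine Polynomial.eq_of_infinite_eval_eq _ _ ((Set.infinite_coe_iff.1 hx).mono fun t ht ↦ ?_)
      have y_eq : y t = x := congrArg Subtype.val ht
      rw [Set.mem_ofPred_eq, ← y_apply t hrb, y_eq, Polynomial.eval_C]
    exact hγb (by rw [γb_eq_C, Polynomial.natDegree_C])
  obtain hfin | hconst := hcurve (MvPolynomial.aeval fun _ ↦ f) (MvPolynomial.aeval 0)
  · refine absurd (hfin.subset ?_) y_infinite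
    rintro _ ⟨t, rfl⟩
    refine ⟨comp_fixed _, MvPolynomial.algHom_ext fun i ↦ ?_⟩
    simp [y_apply t hrf, hγf]
  · refine eq_of_forall_point_eq fun x ↦ ?_
    obtain ⟨i⟩ : Nonempty σ := by
      by_contra! hempty
      rw [MvPolynomial.eq_C_of_isEmpty b, MvPolynomial.algHom_C] at hγb
      exact hγb (Polynomial.natDegree_C _)
    simpa [hrf] using DFunLike.congr_fun (hconst (x.comp r) (comp_fixed x)) (.X i)

lemma IsCurveLike.exists_aevalAeval_eq_zero [Infinite K]
    {r : MvPolynomial σ K →ₐ[K] MvPolynomial σ K} (hcurve : IsCurveLike r)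
    (hr : IsIdempotentElem r) {b c : MvPolynomial σ K} (hb : b.totalDegree ≠ 0) (hrb : r b = b)
    (hrc : r c = c) : ∃ F : K[X][X], F ≠ 0 ∧ Polynomial.aevalAeval b c F = 0 := by
  obtain ⟨γ, hγ⟩ := exists_algHom_natDegree_ne_zero hb
  obtain ⟨F, hF, hFγ⟩ := _root_.exists_aevalAeval_eq_zero (γ b) (γ c)
  refine ⟨F, hF, hcurve.eq_zero_of_map_eq_zero hr hrb hγ ?_ ?_⟩
  · rw [map_aevalAeval, hrb, hrc]
  · rw [map_aevalAeval, hFγ]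

end Domain

variable {K σ : Type*} [Field K]

lemma isUnit_iff_ne_zero_and_totalDegree_eq_zero {f : MvPolynomial σ K} :
    IsUnit f ↔ f ≠ 0 ∧ f.totalDegree = 0 := by
  rw [MvPolynomial.isUnit_iff_totalDegree_of_isReduced, and_congr_left_iff]
  intro hf
  rw [MvPolynomial.totalDegree_eq_zero_iff_eq_C.1 hf]
  simp

/-- `b` is a nonconstant polynomial fixed by `r`, of least possible total degree. For an idempotent
`r` whose image is a polynomial ring in one variable, these are the generators of the image. -/
structure IsMinimalFixed (r : MvPolynomial σ K →ₐ[K] MvPolynomial σ K) (b : MvPolynomial σ K) :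
    Prop where
  map_eq : r b = b
  totalDegree_ne_zero : b.totalDegree ≠ 0
  totalDegree_le {c : MvPolynomial σ K} (hrc : r c = c) (hc : c.totalDegree ≠ 0) :
    b.totalDegree ≤ c.totalDegree

lemma exists_isMinimalFixed {r : MvPolynomial σ K →ₐ[K] MvPolynomial σ K}
    (hr : IsIdempotentElem r) (hconst : ∀ x, r ≠ constEnd x) : ∃ b, IsMinimalFixed r b := by
  let fixed : Set (MvPolynomial σ K) := {b | r b = b ∧ b.totalDegree ≠ 0}
  have fixed_nonempty : fixed.Nonempty := by
    by_contra! hempty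
    obtain ⟨x, hx⟩ := exists_eq_constEnd_of_totalDegree_eq_zero (r := r) fun a ↦ by_contra fun ha ↦
      hempty.subset (show r a ∈ fixed from ⟨DFunLike.congr_fun hr a, ha⟩)
    exact hconst x hx
  obtain ⟨b, hb, hmin⟩ := (measure MvPolynomial.totalDegree).wf.has_min fixed fixed_nonempty
  exact ⟨b, hb.1, hb.2, fun hrc hc ↦ not_lt.1 (hmin _ ⟨hrc, hc⟩)⟩

namespace IsMinimalFixed

variable {r : MvPolynomial σ K →ₐ[K] MvPolynomial σ K} {b : MvPolynomial σ K}

lemma ne_zero (hb : IsMinimalFixed r b) : b ≠ 0 := by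
  rintro rfl
  exact hb.totalDegree_ne_zero MvPolynomial.totalDegree_zero

lemma not_isUnit (hb : IsMinimalFixed r b) : ¬ IsUnit b :=
  fun h ↦ hb.totalDegree_ne_zero (isUnit_iff_ne_zero_and_totalDegree_eq_zero.1 h).2

lemma sub_C (hb : IsMinimalFixed r b) (c : K) : IsMinimalFixed r (b - .C c) := by
  have map_eq : r (b - .C c) = b - .C c := by
    rw [map_sub, hb.map_eq, MvPolynomial.algHom_C, MvPolynomial.algebraMap_eq]
  have totalDegree_le : (b - .C c).totalDegree ≤ b.totalDegree :=
    MvPolynomial.totalDegree_sub_C_le b c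
  refine ⟨map_eq, fun h ↦ hb.totalDegree_ne_zero ?_,
    fun hrc hc ↦ totalDegree_le.trans (hb.totalDegree_le hrc hc)⟩
  rw [MvPolynomial.totalDegree_eq_zero_iff_eq_C, sub_eq_iff_eq_add, ← map_add] at h
  rw [h, MvPolynomial.totalDegree_C]

lemma dvd_of_dvd_of_not_isUnit (hb : IsMinimalFixed r b) {c : MvPolynomial σ K} (hrc : r c = c)
    (hc : ¬ IsUnit c) (hcb : c ∣ b) : b ∣ c := by
  obtain ⟨q, rfl⟩ := hcb
  have hcq := mul_ne_zero_iff.1 hb.ne_zero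
  have hcdeg : c.totalDegree ≠ 0 :=
    fun h ↦ hc (isUnit_iff_ne_zero_and_totalDegree_eq_zero.2 ⟨hcq.1, h⟩)
  have hle := hb.totalDegree_le hrc hcdeg
  rw [MvPolynomial.totalDegree_mul_of_isDomain hcq.1 hcq.2] at hle
  have hq : IsUnit q := isUnit_iff_ne_zero_and_totalDegree_eq_zero.2 ⟨hcq.2, by omega⟩
  exact (hq.mul_right_dvd).2 dvd_rfl

-- By minimality of its degree, `b` is associated to `r p` for some prime factor `p` of `b`.
lemma isPrime_comap_span (hb : IsMinimalFixed r b) (hr : IsIdempotentElem r) :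
    (Ideal.comap r (Ideal.span {b})).IsPrime := by
  have map_map (a : MvPolynomial σ K) : r (r a) = r a := DFunLike.congr_fun hr a
  obtain ⟨p, hp, hpb, hrp⟩ := exists_prime_dvd_not_isUnit_map
    (r : MvPolynomial σ K →* MvPolynomial σ K) hb.ne_zero (by simpa [hb.map_eq] using hb.not_isUnit)
  have map_p_dvd : r p ∣ b := hb.map_eq ▸ map_dvd r hpb
  have dvd_map_p : b ∣ r p := hb.dvd_of_dvd_of_not_isUnit (map_map p) hrp map_p_dvd
  have dvd_map_of_dvd {a : MvPolynomial σ K} (h : p ∣ r a) : b ∣ r a :=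
    dvd_map_p.trans (map_map a ▸ map_dvd r h)
  refine ⟨?_, fun {a c} hac ↦ ?_⟩
  · rw [Ne, Ideal.comap_eq_top_iff, Ideal.span_singleton_eq_top]
    exact hb.not_isUnit
  · simp only [Ideal.mem_comap, Ideal.mem_span_singleton, map_mul] at hac ⊢
    exact (hp.dvd_or_dvd (hpb.trans hac)).imp dvd_map_of_dvd dvd_map_of_dvd

lemma transcendental (hb : IsMinimalFixed r b) : Transcendental K b := by
  intro halg
  obtain ⟨c, hc, hbc⟩ := halg.exists_nonzero_dvd (mem_nonZeroDivisors_of_ne_zero hb.ne_zero)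
  exact hb.not_isUnit (isUnit_of_dvd_unit hbc (hc.isUnit.map _))

variable [Infinite K]

lemma dvd_sub_C (hb : IsMinimalFixed r b) (hr : IsIdempotentElem r) (hcurve : IsCurveLike r)
    {y : MvPolynomial σ K →ₐ[K] K} (hyr : y.comp r = y) (hyb : y b = 0) {c : MvPolynomial σ K}
    (hrc : r c = c) : b ∣ c - .C (y c) := by
  set a := c - .C (y c)
  have hra : r a = a := by
    rw [map_sub, hrc, MvPolynomial.algHom_C, MvPolynomial.algebraMap_eq]
  have hya : y a = 0 := by
    rw [map_sub, MvPolynomial.algHom_C, Algebra.algebraMap_self_apply, sub_self]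
  obtain ⟨F, hF, hFba⟩ :=
    hcurve.exists_aevalAeval_eq_zero hr hb.totalDegree_ne_zero hb.map_eq hra
  obtain ⟨G, hG, hbG⟩ := exists_dvd_aeval_of_aevalAeval_eq_zero hb.ne_zero hF hFba
  have := hb.isPrime_comap_span hr
  have le_ker : Ideal.comap r (Ideal.span {b}) ≤ RingHom.ker y := by
    intro g hg
    rw [Ideal.mem_comap, Ideal.mem_span_singleton] at hg
    rw [RingHom.mem_ker, ← hyr]
    exact zero_dvd_iff.1 (hyb ▸ map_dvd y hg)
  have a_mem := mem_of_aeval_mem_of_le_ker le_ker hya hG (by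
    rwa [Ideal.mem_comap, ← Polynomial.aeval_algHom_apply, hra, Ideal.mem_span_singleton])
  rwa [Ideal.mem_comap, hra, Ideal.mem_span_singleton] at a_mem

lemma exists_aeval_eq (hb : IsMinimalFixed r b) (hr : IsIdempotentElem r) (hcurve : IsCurveLike r)
    {y : MvPolynomial σ K →ₐ[K] K} (hyr : y.comp r = y) (hyb : y b = 0) {c : MvPolynomial σ K}
    (hrc : r c = c) : ∃ g : K[X], Polynomial.aeval b g = c := by
  induction hd : c.totalDegree using Nat.strong_induction_on generalizing c with
  | h d ih =>
    obtain ⟨q, hq⟩ := hb.dvd_sub_C hr hcurve hyr hyb hrc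
    obtain rfl | hq0 := eq_or_ne q 0
    · refine ⟨.C (y c), ?_⟩
      rw [mul_zero, sub_eq_zero] at hq
      rw [Polynomial.aeval_C, MvPolynomial.algebraMap_eq, ← hq]
    have hrq : r q = q := by
      refine mul_left_cancel₀ hb.ne_zero ?_
      conv_lhs => rw [← hb.map_eq]
      rw [← map_mul, ← hq, map_sub, hrc, MvPolynomial.algHom_C, MvPolynomial.algebraMap_eq]
    have q_lt : q.totalDegree < d := by
      have sub_C_le := MvPolynomial.totalDegree_sub_C_le c (y c)
      rw [hq, MvPolynomial.totalDegree_mul_of_isDomain hb.ne_zero hq0] at sub_C_le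
      have := hb.totalDegree_ne_zero
      omega
    obtain ⟨g, hg⟩ := ih _ q_lt hrq rfl
    refine ⟨.C (y c) + .X * g, ?_⟩
    rw [map_add, map_mul, Polynomial.aeval_C, Polynomial.aeval_X, hg, ← hq,
      MvPolynomial.algebraMap_eq, add_sub_cancel]

end IsMinimalFixed

theorem exists_lineRetract_idem_eq [Infinite K]
    {r : MvPolynomial σ K →ₐ[K] MvPolynomial σ K} (hr : IsIdempotentElem r)
    (hcurve : IsCurveLike r) (hconst : ∀ x, r ≠ constEnd x) :
    ∃ ℓ : LineRetract K (MvPolynomial σ K), ℓ.idem = r := by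
  have map_map (a : MvPolynomial σ K) : r (r a) = r a := DFunLike.congr_fun hr a
  obtain ⟨y, hyr⟩ : ∃ y : MvPolynomial σ K →ₐ[K] K, y.comp r = y :=
    ⟨(MvPolynomial.aeval 0).comp r, AlgHom.ext fun a ↦ congrArg (MvPolynomial.aeval 0) (map_map a)⟩
  obtain ⟨b, hb, hyb⟩ : ∃ b, IsMinimalFixed r b ∧ y b = 0 := by
    obtain ⟨b, hb⟩ := exists_isMinimalFixed hr hconst
    refine ⟨b - .C (y b), hb.sub_C (y b), ?_⟩
    rw [map_sub, MvPolynomial.algHom_C, Algebra.algebraMap_self_apply, sub_self]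
  have aeval_injective : Function.Injective (Polynomial.aeval (R := K) b) :=
    transcendental_iff_injective.1 hb.transcendental
  have aeval_fixed (p : K[X]) : r (Polynomial.aeval b p) = Polynomial.aeval b p := by
    rw [← Polynomial.aeval_algHom_apply, hb.map_eq]
  have mem_range (a : MvPolynomial σ K) : r a ∈ (Polynomial.aeval (R := K) b).range :=
    hb.exists_aeval_eq hr hcurve hyr hyb (map_map a)
  exact LineRetract.exists_idem_eq aeval_injective aeval_fixed mem_range

end PolynomialRing

/-- The diagonal line in affine space, parametrized by its `i`-th coordinate. -/
noncomputable def diagonalLine (K : Type*) [CommSemiring K] {σ : Type*} (i : σ) :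
    LineRetract K (MvPolynomial σ K) where
  incl := Polynomial.aeval (.X i)
  proj := MvPolynomial.aeval fun _ ↦ .X
  proj_comp_incl := by
    ext
    simp

lemma exists_lineRetract_idem_eq_map_idem {K σ : Type*} [Field K] [Infinite K]
    (τ : (MvPolynomial σ K →ₐ[K] MvPolynomial σ K) ≃* (MvPolynomial σ K →ₐ[K] MvPolynomial σ K))
    (ℓ : LineRetract K (MvPolynomial σ K)) :
    ∃ m : LineRetract K (MvPolynomial σ K), m.idem = τ ℓ.idem := by
  refine exists_lineRetract_idem_eq (ℓ.isIdempotentElem_idem.map τ) (ℓ.isCurveLike_idem.map τ)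
    fun x hx ↦ ?_
  obtain ⟨y, rfl⟩ := (pointEquiv τ).surjective x
  rw [constEnd_pointEquiv, τ.apply_eq_iff_eq] at hx
  exact ℓ.idem_ne_constEnd y hx

lemma exists_algEquiv_eq_map_of_semilinear {K σ : Type*} [CommSemiring K] {α : K ≃+* K}
    {T : MvPolynomial σ K ≃+* MvPolynomial σ K} (hT : ∀ c, T (.C c) = .C (α c)) :
    ∃ η : MvPolynomial σ K ≃ₐ[K] MvPolynomial σ K,
      ∀ f, T f = MvPolynomial.map (α : K →+* K) (η f) := by
  refine ⟨AlgEquiv.ofRingEquiv (f := T.trans (MvPolynomial.mapEquiv σ α.symm)) fun c ↦ ?_,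
    fun f ↦ ?_⟩
  · simp [MvPolynomial.algebraMap_eq, hT]
  · exact ((MvPolynomial.mapEquiv σ α).apply_symm_apply (T f)).symm

theorem aut_end_semiinner_general {K σ : Type*} [Field K] [Infinite K]
    (τ : (MvPolynomial σ K →ₐ[K] MvPolynomial σ K) ≃* (MvPolynomial σ K →ₐ[K] MvPolynomial σ K)) :
    ∃ (α : K ≃+* K) (η : MvPolynomial σ K ≃ₐ[K] MvPolynomial σ K),
      ∀ (s : MvPolynomial σ K →ₐ[K] MvPolynomial σ K) (u : MvPolynomial σ K),
        τ s u = MvPolynomial.map (α : K →+* K)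
          (η (s (η.symm (MvPolynomial.map (α.symm : K →+* K) u)))) := by
  obtain hempty | ⟨⟨i⟩⟩ := isEmpty_or_nonempty σ
  · refine ⟨.refl K, .refl, fun s u ↦ ?_⟩
    simp [MvPolynomial.algHom_ext (f := τ s) (g := s) isEmptyElim, MvPolynomial.map_id]
  obtain ⟨m, hm⟩ := exists_lineRetract_idem_eq_map_idem τ (diagonalLine K i)
  obtain ⟨α, T, T_algebraMap, T_map⟩ :=
    LineRetract.exists_semilinear_ringEquiv hm.symm fun _ _ ↦ eq_of_forall_point_eq
  obtain ⟨η, hη⟩ := exists_algEquiv_eq_map_of_semilinear T_algebraMap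
  refine ⟨α, η, fun s u ↦ ?_⟩
  have T_inv : T (η.symm (MvPolynomial.map (α.symm : K →+* K) u)) = u := by
    rw [hη, η.apply_symm_apply]
    exact (MvPolynomial.mapEquiv σ α).apply_symm_apply u
  rw [← hη, T_map, T_inv]

/-- Main theorem: Over an algebraically closed field P, every
automorphism τ of the monoid End(P[x_1,…,x_n]) of P-algebra endomorphisms is
semiinner: there exist a field automorphism α of P and a P-algebra
automorphism η of P[X] such that, with μ = ᾱ ∘ η (ᾱ acting on coefficients),
τ(s) = μ ∘ s ∘ μ⁻¹ for every endomorphism s. -/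
theorem aut_end_semiinner {P : Type*} [Field P] [IsAlgClosed P]
    (n : ℕ) (hn : 1 ≤ n)
    (τ : (MvPolynomial (Fin n) P →ₐ[P] MvPolynomial (Fin n) P) ≃*
         (MvPolynomial (Fin n) P →ₐ[P] MvPolynomial (Fin n) P)) :
    ∃ (α : P ≃+* P) (η : MvPolynomial (Fin n) P ≃ₐ[P] MvPolynomial (Fin n) P),
      ∀ (s : MvPolynomial (Fin n) P →ₐ[P] MvPolynomial (Fin n) P)
        (u : MvPolynomial (Fin n) P),
        τ s u =
          MvPolynomial.map (α : P →+* P)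
            (η (s (η.symm (MvPolynomial.map (α.symm : P →+* P) u)))) := by
  exact aut_end_semiinner_general τ
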